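/- (Optimality of the marginals in the inner minimization.) Let p be a strictly positive joint pmf on Fin m × Fin n and q a strictly positive conditional pmf. Then for all functions r : Fin k → Fin m → ℝ and s : Fin k → Fin n → ℝ with r z x > 0 and s z y > 0 for all z, x, y, ∑_z r z x = 1 for every x, and ∑_z s z y = 1 for every y, one has ∑_{x,y,z} p x y · q z x y · log( q z x y / (r z x · s z y) ) ≥ ∑_{x,y,z} p x y · q z x y · log( q z x y / (qX z x · qY z y) ). That is, among all such (r, s), the choice r = qX, s = qY minimizes the left-hand side. -/

import Mathlib

open Real Finset Filter

/-- A strictly positive joint pmf on `Fin m × Fin n`. -/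
def IsJointPMF {m n : ℕ} (p : Fin m → Fin n → ℝ) : Prop :=
  (∀ x y, 0 < p x y) ∧ (∑ x, ∑ y, p x y = 1)

/-- A strictly positive conditional pmf `q z x y = q(z | x, y)`. -/
def IsCondPMF {m n k : ℕ} (q : Fin k → Fin m → Fin n → ℝ) : Prop :=
  (∀ z x y, 0 < q z x y) ∧ (∀ x y, ∑ z, q z x y = 1)

/-- Marginal `q(z | x)`. -/
noncomputable def qX {m n k : ℕ} (p : Fin m → Fin n → ℝ)
    (q : Fin k → Fin m → Fin n → ℝ) (z : Fin k) (x : Fin m) : ℝ :=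
  (∑ y, q z x y * p x y) / (∑ y, p x y)

/-- Marginal `q(z | y)`. -/
noncomputable def qY {m n k : ℕ} (p : Fin m → Fin n → ℝ)
    (q : Fin k → Fin m → Fin n → ℝ) (z : Fin k) (y : Fin n) : ℝ :=
  (∑ x, q z x y * p x y) / (∑ x, p x y)

/-- Marginal `q(z)`. -/
noncomputable def qZ {m n k : ℕ} (p : Fin m → Fin n → ℝ)
    (q : Fin k → Fin m → Fin n → ℝ) (z : Fin k) : ℝ :=
  ∑ x, ∑ y, q z x y * p x y

/-- The LatentSearch update `T_β(q)`. Here `(qZ z) ^ (1 - β)` is the real power `rpow`. -/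
noncomputable def latentUpdate {m n k : ℕ} (β : ℝ) (p : Fin m → Fin n → ℝ)
    (q : Fin k → Fin m → Fin n → ℝ) : Fin k → Fin m → Fin n → ℝ :=
  fun z x y =>
    (qX p q z x * qY p q z y / (qZ p q z) ^ (1 - β)) /
      (∑ z', qX p q z' x * qY p q z' y / (qZ p q z') ^ (1 - β))

/-- The loss `L_β(q) = I(X;Y|Z) + β H(Z)` computed from the joint `r(x,y,z) = q z x y * p x y`. -/
noncomputable def loss {m n k : ℕ} (β : ℝ) (p : Fin m → Fin n → ℝ)
    (q : Fin k → Fin m → Fin n → ℝ) : ℝ :=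
  (∑ x, ∑ y, ∑ z, (q z x y * p x y) *
      Real.log ((q z x y * p x y) * qZ p q z /
        ((∑ y', q z x y' * p x y') * (∑ x', q z x' y * p x' y)))) -
    β * ∑ z, qZ p q z * Real.log (qZ p q z)

/-- The mutual information `I(X;Y)` of the observed joint pmf `p`. -/
noncomputable def mutualInfo {m n : ℕ} (p : Fin m → Fin n → ℝ) : ℝ :=
  ∑ x, ∑ y, p x y * Real.log (p x y / ((∑ y', p x y') * (∑ x', p x' y)))

/-- Gibbs inequality for one marginal. -/
lemma gibbs_aux {n k : ℕ} (hn : 1 ≤ n) (p : Fin n → ℝ) (q : Fin k → Fin n → ℝ)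
    (r : Fin k → ℝ) (hp : ∀ y, 0 < p y) (hq : ∀ z y, 0 < q z y)
    (hqs : ∀ y, ∑ z, q z y = 1) (hr : ∀ z, 0 < r z) (hrs : ∑ z, r z = 1) :
    0 ≤ ∑ y, ∑ z, p y * q z y *
      (Real.log ((∑ y, q z y * p y) / (∑ y, p y)) - Real.log (r z)) := by
  haveI : Nonempty (Fin n) := ⟨⟨0, hn⟩⟩
  have hP : 0 < ∑ y, p y := Finset.sum_pos (fun y _ => hp y) Finset.univ_nonempty
  have hS : ∀ z, 0 < ∑ y, q z y * p y := fun z =>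
    Finset.sum_pos (fun y _ => mul_pos (hq z y) (hp y)) Finset.univ_nonempty
  have htot : ∑ z, ∑ y, q z y * p y = ∑ y, p y := by
    rw [Finset.sum_comm]
    refine Finset.sum_congr rfl fun y _ => ?_
    rw [← Finset.sum_mul, hqs, one_mul]
  rw [Finset.sum_comm]
  have key : ∀ z, (∑ y, q z y * p y) - r z * (∑ y, p y) ≤ ∑ y, p y * q z y *
      (Real.log ((∑ y, q z y * p y) / (∑ y, p y)) - Real.log (r z)) := by
    intro z
    rw [← Finset.sum_mul]
    have h1 : ∑ y, p y * q z y = ∑ y, q z y * p y :=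
      Finset.sum_congr rfl fun y _ => mul_comm _ _
    rw [h1]
    have hA := hS z
    have hrz := hr z
    generalize (∑ y, q z y * p y) = S at hA ⊢
    generalize (∑ y, p y) = P at hP ⊢
    have h2 := Real.log_le_sub_one_of_pos (div_pos hrz (div_pos hA hP))
    rw [Real.log_div hrz.ne' (div_pos hA hP).ne'] at h2
    have h3 : S * (1 - r z / (S / P)) ≤ S * (Real.log (S / P) - Real.log (r z)) :=
      mul_le_mul_of_nonneg_left (by linarith) hA.le
    have h4 : S * (1 - r z / (S / P)) = S - r z * P := by
      field_simp
    linarith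
  have h := Finset.sum_le_sum fun z (_ : z ∈ Finset.univ) => key z
  rw [Finset.sum_sub_distrib, ← Finset.sum_mul, htot, hrs] at h
  linarith

/-- Optimality of the marginals in the inner minimization: among all strictly
positive conditionals `r(z|x)`, `s(z|y)`, the choice `r = qX`, `s = qY` minimizes
`∑ p(x,y) q(z|x,y) log(q(z|x,y)/(r(z|x) s(z|y)))`. -/
theorem inner_minimization_optimality (m n k : ℕ)
    (hm : 1 ≤ m) (hn : 1 ≤ n) (hk : 1 ≤ k)
    (p : Fin m → Fin n → ℝ) (hp : IsJointPMF p)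
    (q : Fin k → Fin m → Fin n → ℝ) (hq : IsCondPMF q)
    (r : Fin k → Fin m → ℝ) (s : Fin k → Fin n → ℝ)
    (hr : ∀ z x, 0 < r z x) (hs : ∀ z y, 0 < s z y)
    (hrsum : ∀ x, ∑ z, r z x = 1) (hssum : ∀ y, ∑ z, s z y = 1) :
    ∑ x, ∑ y, ∑ z, p x y * q z x y * Real.log (q z x y / (r z x * s z y)) ≥
      ∑ x, ∑ y, ∑ z, p x y * q z x y *
        Real.log (q z x y / (qX p q z x * qY p q z y)) := by
  obtain ⟨hp0, -⟩ := hp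
  obtain ⟨hq0, hq1⟩ := hq
  haveI : Nonempty (Fin n) := ⟨⟨0, hn⟩⟩
  haveI : Nonempty (Fin m) := ⟨⟨0, hm⟩⟩
  have hX : ∀ z x, 0 < qX p q z x := fun z x => div_pos
    (Finset.sum_pos (fun y _ => mul_pos (hq0 z x y) (hp0 x y)) Finset.univ_nonempty)
    (Finset.sum_pos (fun y _ => hp0 x y) Finset.univ_nonempty)
  have hY : ∀ z y, 0 < qY p q z y := fun z y => div_pos
    (Finset.sum_pos (fun x _ => mul_pos (hq0 z x y) (hp0 x y)) Finset.univ_nonempty)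
    (Finset.sum_pos (fun x _ => hp0 x y) Finset.univ_nonempty)
  have h1 : 0 ≤ ∑ x, ∑ y, ∑ z, p x y * q z x y *
      (Real.log (qX p q z x) - Real.log (r z x)) :=
    Finset.sum_nonneg fun x _ => gibbs_aux hn (p x) (fun z y => q z x y) (fun z => r z x)
      (hp0 x) (fun z y => hq0 z x y) (hq1 x) (fun z => hr z x) (hrsum x)
  have h2 : 0 ≤ ∑ x, ∑ y, ∑ z, p x y * q z x y *
      (Real.log (qY p q z y) - Real.log (s z y)) := by
    rw [Finset.sum_comm]
    exact Finset.sum_nonneg fun y _ => gibbs_aux hm (fun x => p x y) (fun z x => q z x y)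
      (fun z => s z y) (fun x => hp0 x y) (fun z x => hq0 z x y) (fun x => hq1 x y)
      (fun z => hs z y) (hssum y)
  have h3 : ∑ x, ∑ y, ∑ z, p x y * q z x y * Real.log (q z x y / (r z x * s z y)) =
      ∑ x, ∑ y, ∑ z, p x y * q z x y *
        Real.log (q z x y / (qX p q z x * qY p q z y)) +
      (∑ x, ∑ y, ∑ z, p x y * q z x y * (Real.log (qX p q z x) - Real.log (r z x)) +
       ∑ x, ∑ y, ∑ z, p x y * q z x y * (Real.log (qY p q z y) - Real.log (s z y))) := by
    simp only [← Finset.sum_add_distrib]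
    refine Finset.sum_congr rfl fun x _ => Finset.sum_congr rfl fun y _ =>
      Finset.sum_congr rfl fun z _ => ?_
    rw [Real.log_div (hq0 z x y).ne' (mul_pos (hr z x) (hs z y)).ne',
      Real.log_div (hq0 z x y).ne' (mul_pos (hX z x) (hY z y)).ne',
      Real.log_mul (hr z x).ne' (hs z y).ne', Real.log_mul (hX z x).ne' (hY z y).ne']
    ring
  linarith
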